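/- Fix a positive integer $n$, a real number $p \in (0,1)$, a positive integer $k \le n$, and let $X_j \sim \mathrm{Bin}(j,p)$ for $j \le n$. Then $\mathbb{P}[X_n \ge k] = p^k \cdot \prod_{j=0}^{k-1} \frac{n-j}{\mathbb{E}[X_{n-j} \mid X_{n-j} \ge k-j]}$. -/

import Mathlib

/-- The binomial probability mass function: `P[Bin(n,p) = i] = C(n,i) p^i (1-p)^(n-i)`. -/
noncomputable def binPMF (n : ℕ) (p : ℝ) (i : ℕ) : ℝ :=
  (n.choose i : ℝ) * p ^ i * (1 - p) ^ (n - i)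

/-- The binomial tail probability `P[Bin(n,p) ≥ k]`. -/
noncomputable def binTail (n : ℕ) (p : ℝ) (k : ℕ) : ℝ :=
  ∑ i ∈ Finset.Icc k n, binPMF n p i

/-- The tail conditional expectation `E[Bin(n,p) | Bin(n,p) ≥ k]`,
i.e. `E[X · 1_{X ≥ k}] / P[X ≥ k]`. -/
noncomputable def binTCE (n : ℕ) (p : ℝ) (k : ℕ) : ℝ :=
  (∑ i ∈ Finset.Icc k n, (i : ℝ) * binPMF n p i) / binTail n p k

/-!
By the absorption identity `i * C(m, i) = m * C(m - 1, i - 1)`, weighting the mass function of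
`Bin(m, p)` by its argument gives `m * p` times the mass function of `Bin(m - 1, p)`, shifted by
one. Summed over the tail, this reads
`E[X_m | X_m ≥ κ] * P[X_m ≥ κ] = m * p * P[X_{m-1} ≥ κ - 1]`, which expresses each tail through the
next smaller one, down to `P[X_{n-k} ≥ 0] = 1`.
-/

theorem binPMF_nonneg {p : ℝ} (hp : 0 ≤ p) (hp1 : p ≤ 1) (n i : ℕ) : 0 ≤ binPMF n p i :=
  mul_nonneg (mul_nonneg (Nat.cast_nonneg _) (pow_nonneg hp i))
    (pow_nonneg (sub_nonneg.mpr hp1) (n - i))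

theorem binPMF_self (n : ℕ) (p : ℝ) : binPMF n p n = p ^ n := by
  simp [binPMF]

theorem succ_mul_binPMF_succ (n i : ℕ) (p : ℝ) :
    ((i + 1 : ℕ) : ℝ) * binPMF (n + 1) p (i + 1) = ((n + 1 : ℕ) : ℝ) * p * binPMF n p i := by
  have absorption : ((n + 1 : ℕ) : ℝ) * n.choose i = (n + 1).choose (i + 1) * ((i + 1 : ℕ) : ℝ) :=
    mod_cast Nat.add_one_mul_choose_eq n i
  simp only [binPMF, Nat.add_sub_add_right]
  linear_combination -(p ^ (i + 1) * (1 - p) ^ (n - i)) * absorption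

theorem sum_Icc_mul_binPMF_succ (n k : ℕ) (p : ℝ) :
    ∑ i ∈ Finset.Icc (k + 1) (n + 1), (i : ℝ) * binPMF (n + 1) p i =
      ((n + 1 : ℕ) : ℝ) * p * binTail n p k := by
  rw [← Finset.map_add_right_Icc, Finset.sum_map, binTail, Finset.mul_sum]
  exact Finset.sum_congr rfl fun i _ => succ_mul_binPMF_succ n i p

theorem binTail_zero_right (n : ℕ) (p : ℝ) : binTail n p 0 = 1 := by
  calc
    binTail n p 0 = ∑ i ∈ Finset.range (n + 1), p ^ i * (1 - p) ^ (n - i) * n.choose i := by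
      rw [binTail, ← Nat.range_succ_eq_Icc_zero]
      exact Finset.sum_congr rfl fun i _ => by rw [binPMF]; ring
    _ = (p + (1 - p)) ^ n := (add_pow p (1 - p) n).symm
    _ = 1 := by rw [add_sub_cancel, one_pow]

section PositiveProbability

variable {n k : ℕ} {p : ℝ}

theorem binTail_pos (hp : 0 < p) (hp1 : p ≤ 1) (hkn : k ≤ n) : 0 < binTail n p k := by
  refine Finset.sum_pos' (fun i _ => binPMF_nonneg hp.le hp1 n i)
    ⟨n, Finset.right_mem_Icc.mpr hkn, ?_⟩
  rw [binPMF_self]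
  exact pow_pos hp n

theorem binTail_eq_div_binTCE_mul_binTail_pred (hp : 0 < p) (hp1 : p ≤ 1) (hk : 0 < k)
    (hkn : k ≤ n) :
    binTail n p k = n * p / binTCE n p k * binTail (n - 1) p (k - 1) := by
  obtain ⟨κ, rfl⟩ := Nat.exists_eq_add_one.mpr hk
  obtain ⟨m, rfl⟩ := Nat.exists_eq_add_one.mpr (hk.trans_le hkn)
  have tail_ne : binTail (m + 1) p (κ + 1) ≠ 0 := (binTail_pos hp hp1 hkn).ne'
  have pred_tail_ne : binTail m p κ ≠ 0 := (binTail_pos hp hp1 (Nat.le_of_succ_le_succ hkn)).ne'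
  have succ_ne : ((m + 1 : ℕ) : ℝ) ≠ 0 := Nat.cast_ne_zero.mpr m.succ_ne_zero
  rw [binTCE, sum_Icc_mul_binPMF_succ, Nat.add_sub_cancel, Nat.add_sub_cancel]
  field_simp

theorem binTail_eq_prod_mul_binTail_sub (hp : 0 < p) (hp1 : p ≤ 1) (hkn : k ≤ n) {l : ℕ}
    (hlk : l ≤ k) :
    binTail n p k =
      p ^ l * (∏ j ∈ Finset.range l, ((n : ℝ) - j) / binTCE (n - j) p (k - j)) *
        binTail (n - l) p (k - l) := by
  induction l with
  | zero => simp
  | succ l ih =>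
    have tail_sub := binTail_eq_div_binTCE_mul_binTail_pred hp hp1
      (Nat.sub_pos_of_lt hlk) (Nat.sub_le_sub_right hkn l)
    rw [Nat.cast_sub ((Nat.le_of_succ_le hlk).trans hkn), Nat.sub_sub, Nat.sub_sub] at tail_sub
    rw [ih (Nat.le_of_succ_le hlk), tail_sub, Finset.prod_range_succ]
    ring

end PositiveProbability

theorem binomial_tail_full_product_formula
    (n k : ℕ) (p : ℝ) (hn : 0 < n) (hp : 0 < p) (hp1 : p < 1)
    (hk : 0 < k) (hkn : k ≤ n) :
    binTail n p k =
      p ^ k * ∏ j ∈ Finset.range k, ((n : ℝ) - j) / binTCE (n - j) p (k - j) := by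
  rw [binTail_eq_prod_mul_binTail_sub hp hp1.le hkn le_rfl, Nat.sub_self, binTail_zero_right,
    mul_one]
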